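/- arXiv:1908.05326 — 2 statements merged into one kernel-verified Lean document; each statement's English description precedes it below -/
import Mathlib

section
/- Let X be a semi-inner product C*-module over a C*-algebra A, p ∈ A, e ∈ X with ⟨e,e⟩ idempotent in A, and fix a ∈ A. For f, g Fréchet differentiable at p define [f,g]_a = ⟨Df(p)(a), Dg(p)(a)⟩₁ + ⟨f(p), g(p)⟩₁ − D(t ↦ ⟨f(t), g(t)⟩₁)(p)(a), where ⟨x,y⟩₁ = ⟨x,y⟩ − ⟨x,e⟩⟨e,y⟩. Then [f,f]_a ≥ 0 in A; in fact [f,g]_a = ⟨u − e⟨e,u⟩, v − e⟨e,v⟩⟩ where u = Df(p)(a) − f(p) and v = Dg(p)(a) − g(p). -/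
/-- In an ordered C⋆-ring which is a complex algebra, the square root `I • 1` of `-1` is necessarily
skew-adjoint. -/
theorem star_algebraMap_I_of_starOrderedRing {A : Type*} [NormedRing A] [StarRing A]
    [PartialOrder A] [StarOrderedRing A] [NormedAlgebra ℂ A] :
    star (algebraMap ℂ A Complex.I) = -algebraMap ℂ A Complex.I := by
  set j := algebraMap ℂ A Complex.I with hj
  have hjj : j * j = -1 := by rw [hj, ← map_mul, Complex.I_mul_I, map_neg, map_one]
  have hkk : star j * star j = -1 := by rw [← star_mul, hjj, star_neg, star_one]
  have hcomm : star j * j = j * star j := (Algebra.commutes Complex.I (star j)).symm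
  have hsq : (j * star j) * (j * star j) = 1 := by
    rw [mul_assoc, ← mul_assoc (star j), hcomm, mul_assoc, hkk, mul_neg_one, mul_neg, hjj, neg_neg]
  have hsa : star (1 - j * star j) = 1 - j * star j := by simp
  have hqq : (1 - j * star j) * (1 - j * star j) = 2 • (1 - j * star j) := by
    have : (1 - j * star j) * (1 - j * star j)
        = 1 - j * star j - j * star j + (j * star j) * (j * star j) := by noncomm_ring
    rw [this, hsq]; abel
  have hpos : 0 ≤ 2 • (1 - j * star j) := by
    have := star_mul_self_nonneg (1 - j * star j)
    rwa [hsa, hqq] at this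
  have hneg : 0 ≤ -(2 • (2 • (1 - j * star j))) := by
    have h := star_mul_self_nonneg (j * (1 - j * star j))
    have hcom : (1 - j * star j) * (j * star j) = -(1 - j * star j) := by
      rw [sub_mul, hsq, one_mul, neg_sub]
    have : star (j * (1 - j * star j)) * (j * (1 - j * star j))
        = -(2 • (1 - j * star j)) := by
      rw [star_mul, hsa, mul_assoc, ← mul_assoc (star j), hcomm, ← mul_assoc, hcom, neg_mul, hqq]
    rw [this] at h
    rw [← smul_neg]
    exact nsmul_nonneg h 2
  have hzero : 2 • (2 • (1 - j * star j)) = 0 :=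
    le_antisymm (neg_nonneg.mp hneg) (nsmul_nonneg hpos 2)
  have hone : 1 - j * star j = 0 := by
    have h4 : (4 : ℂ) • (1 - j * star j) = 0 := by
      rw [← hzero, ← mul_nsmul, ← Nat.cast_smul_eq_nsmul ℂ]; norm_num
    exact (smul_eq_zero.mp h4).resolve_left (by norm_num)
  have := congrArg (j * ·) (sub_eq_zero.mp hone)
  simp only [mul_one, ← mul_assoc, hjj, neg_one_mul] at this
  exact neg_eq_iff_eq_neg.mp this.symm

/-- In an ordered C⋆-ring which is a complex normed algebra, the involution is conjugate-linear. -/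
theorem starModule_complex_of_starOrderedRing {A : Type*} [NormedRing A] [StarRing A]
    [CStarRing A] [PartialOrder A] [StarOrderedRing A] [NormedAlgebra ℂ A] : StarModule ℂ A where
  star_smul c a := by
    have hreal (r : ℝ) (b : A) : star (r • b) = r • star b :=
      map_real_smul (starAddEquiv : A ≃+ A) continuous_star r b
    have hI (b : A) : star (Complex.I • b) = -(Complex.I • star b) := by
      rw [Algebra.smul_def, star_mul, star_algebraMap_I_of_starOrderedRing, mul_neg,
        ← Algebra.commutes, ← Algebra.smul_def]
    have hc : c • a = c.re • a + c.im • (Complex.I • a) := by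
      conv_lhs => rw [← Complex.re_add_im c]
      rw [add_smul, mul_smul, Complex.coe_smul, Complex.coe_smul]
    have hc' : star c • star a = c.re • star a - c.im • (Complex.I • star a) := by
      have : star c = (c.re : ℂ) - c.im * Complex.I := by
        apply Complex.ext <;> simp
      rw [this, sub_smul, mul_smul, Complex.coe_smul, Complex.coe_smul]
    rw [hc, hc', star_add, hreal, hreal, hI, smul_neg, sub_eq_add_neg]

theorem CStarAlgebra.eq_zero_of_forall_nsmul_star_mul_self_le {A : Type*} [CStarAlgebra A]
    [PartialOrder A] [StarOrderedRing A] {c d : A} (h : ∀ n : ℕ, n • (star c * c) ≤ d) :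
    c = 0 := by
  have hn (n : ℕ) : n • ‖star c * c‖ ≤ ‖d‖ := by
    have h_norm : ‖n • (star c * c)‖ = n • ‖star c * c‖ := by
      rw [← Nat.cast_smul_eq_nsmul ℝ, norm_smul, Real.norm_natCast, nsmul_eq_mul]
    exact h_norm ▸ CStarAlgebra.norm_le_norm_of_nonneg_of_le
      (nsmul_nonneg (star_mul_self_nonneg c) n) (h n)
  by_contra hc
  obtain ⟨n, hlt⟩ := exists_lt_nsmul
    (norm_pos_iff.mpr ((CStarRing.star_mul_self_ne_zero_iff c).mpr hc)) ‖d‖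
  exact (hlt.trans_le (hn n)).false

/-- A vector of length zero for an algebra-valued semi-inner product is orthogonal to
everything. -/
theorem ip_eq_zero_of_ip_self_eq_zero {A X : Type*} [NormedRing A] [StarRing A] [CStarRing A]
    [PartialOrder A] [StarOrderedRing A] [NormedAlgebra ℂ A] [CompleteSpace A] [AddCommGroup X]
    (smul : X → A → X) (ip : X → X → A)
    (h_add : ∀ x y z : X, ip x (y + z) = ip x y + ip x z)
    (h_add' : ∀ x y z : X, ip (x + y) z = ip x z + ip y z)
    (h_smul : ∀ (x y : X) (a : A), ip x (smul y a) = ip x y * a)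
    (h_star : ∀ x y : X, star (ip x y) = ip y x)
    (h_pos : ∀ x : X, 0 ≤ ip x x) {z : X} (hz : ip z z = 0) (x : X) : ip z x = 0 := by
  have : StarModule ℂ A := starModule_complex_of_starOrderedRing
  let _ : CStarAlgebra A := {}
  have h_smul' (x y : X) (a : A) : ip (smul x a) y = star a * ip x y := by
    rw [← h_star, h_smul, star_mul, h_star]
  refine CStarAlgebra.eq_zero_of_forall_nsmul_star_mul_self_le (d := ip x x) fun n ↦ ?_
  have h := h_pos (x + smul z (-(n • ip z x)))
  have h2 : ip (x + smul z (-(n • ip z x))) (x + smul z (-(n • ip z x)))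
      = ip x x - n • (star (ip z x) * ip z x) - n • (star (ip z x) * ip z x) := by
    simp only [h_add, h_add', h_smul, h_smul', hz, ← h_star z x, star_neg, star_nsmul,
      neg_mul, mul_neg, smul_mul_assoc, mul_smul_comm, mul_zero, zero_mul, smul_zero, neg_zero]
    abel
  rw [h2, sub_nonneg] at h
  exact h.trans (sub_le_self _ (nsmul_nonneg (star_mul_self_nonneg _) n))

/-- Compressing by an element `e` with `⟨e, e⟩` idempotent: the reduced semi-inner product is the
semi-inner product of the components orthogonal to `e`. -/
theorem ip_sub_smul_sub_smul {A X : Type*} [NormedRing A] [StarRing A] [CStarRing A]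
    [PartialOrder A] [StarOrderedRing A] [NormedAlgebra ℂ A] [CompleteSpace A] [AddCommGroup X]
    (smul : X → A → X) (ip : X → X → A)
    (h_add : ∀ x y z : X, ip x (y + z) = ip x y + ip x z)
    (h_add' : ∀ x y z : X, ip (x + y) z = ip x z + ip y z)
    (h_smul : ∀ (x y : X) (a : A), ip x (smul y a) = ip x y * a)
    (h_star : ∀ x y : X, star (ip x y) = ip y x)
    (h_pos : ∀ x : X, 0 ≤ ip x x) {e : X} (h_idem : ip e e * ip e e = ip e e) (u v : X) :
    ip (u - smul e (ip e u)) (v - smul e (ip e v)) = ip u v - ip u e * ip e v := by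
  have h_smul' (x y : X) (a : A) : ip (smul x a) y = star a * ip x y := by
    rw [← h_star, h_smul, star_mul, h_star]
  have h_sub (x y z : X) : ip x (y - z) = ip x y - ip x z :=
    map_sub (AddMonoidHom.mk' (ip x) (h_add x)) y z
  have h_sub' (x y z : X) : ip (x - y) z = ip x z - ip y z :=
    map_sub (AddMonoidHom.mk' (ip · z) (h_add' · · z)) x y
  have hz : ip (e - smul e (ip e e)) (e - smul e (ip e e)) = 0 := by
    simp only [h_sub, h_sub', h_smul, h_smul', h_star, h_idem, sub_self]
  have h := ip_eq_zero_of_ip_self_eq_zero smul ip h_add h_add' h_smul h_star h_pos hz v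
  rw [h_sub', h_smul', h_star, sub_eq_zero] at h
  simp only [h_sub, h_sub', h_smul, h_smul', h_star, mul_assoc]
  rw [← h, sub_self, sub_zero]

/-- The product rule for a biadditive map which is bounded. -/
theorem fderiv_apply_of_biadditive_of_bound {E X A : Type*} [NormedAddCommGroup E]
    [NormedSpace ℝ E] [NormedAddCommGroup X] [NormedSpace ℝ X] [NormedAddCommGroup A]
    [NormedSpace ℝ A] (b : X → X → A)
    (h_add : ∀ x y z : X, b x (y + z) = b x y + b x z)
    (h_add' : ∀ x y z : X, b (x + y) z = b x z + b y z)
    {C : ℝ} (h_bound : ∀ x y : X, ‖b x y‖ ≤ C * ‖x‖ * ‖y‖)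
    {f g : E → X} {f' g' : E →L[ℝ] X} {k : E →L[ℝ] A} {p : E}
    (hf : HasFDerivAt f f' p) (hg : HasFDerivAt g g' p)
    (hk : HasFDerivAt (fun t ↦ b (f t) (g t)) k p) (a : E) :
    k a = b (f p) (g' a) + b (f' a) (g p) := by
  have hr (c : ℝ) (x y : X) : b x (c • y) = c • b x y :=
    map_real_smul (AddMonoidHom.mk' (b x) (h_add x))
      (AddMonoidHomClass.continuous_of_bound _ (C * ‖x‖) (h_bound x)) c y
  have hl (c : ℝ) (x y : X) : b (c • x) y = c • b x y :=
    map_real_smul (AddMonoidHom.mk' (b · y) (h_add' · · y))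
      (AddMonoidHomClass.continuous_of_bound _ (C * ‖y‖)
        fun x ↦ (h_bound x y).trans_eq (mul_right_comm _ _ _)) c x
  let B : X →L[ℝ] X →L[ℝ] A :=
    (LinearMap.mk₂ ℝ b h_add' hl h_add hr).mkContinuous₂ C h_bound
  have hB : HasFDerivAt (fun t ↦ b (f t) (g t)) _ p := B.hasFDerivAt_of_bilinear hf hg
  rw [hk.unique hB]
  rfl


/-- With ⟨x,y⟩₁ = ⟨x,y⟩ − ⟨x,e⟩⟨e,y⟩ (⟨e,e⟩ idempotent), the bracket
[f,g]_a = ⟨Df(p)(a), Dg(p)(a)⟩₁ + ⟨f(p), g(p)⟩₁ − D(t ↦ ⟨f(t), g(t)⟩₁)(p)(a)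
equals ⟨u − e⟨e,u⟩, v − e⟨e,v⟩⟩ for u = Df(p)(a) − f(p), v = Dg(p)(a) − g(p);
in particular [f,f]_a ≥ 0. -/
theorem stmt_5 {A : Type*} [NormedRing A] [StarRing A] [CStarRing A] [PartialOrder A]
    [StarOrderedRing A] [NormedAlgebra ℂ A] [CompleteSpace A]
    {X : Type*} [NormedAddCommGroup X] [NormedSpace ℝ X]
    (smul : X → A → X)
    (ip : X → X → A)
    (h_add : ∀ x y z : X, ip x (y + z) = ip x y + ip x z)
    (h_add' : ∀ x y z : X, ip (x + y) z = ip x z + ip y z)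
    (h_smul : ∀ (x y : X) (a : A), ip x (smul y a) = ip x y * a)
    (h_rsmul : ∀ (c : ℝ) (x y : X), ip x (c • y) = c • ip x y)
    (h_star : ∀ x y : X, star (ip x y) = ip y x)
    (h_pos : ∀ x : X, 0 ≤ ip x x)
    (h_bound : ∀ x y : X, ‖ip x y‖ ≤ ‖x‖ * ‖y‖)
    (h_sm_add : ∀ (x y : X) (a : A), smul (x + y) a = smul x a + smul y a)
    (h_sm_mul : ∀ (x : X) (a b : A), smul x (a * b) = smul (smul x a) b)
    (e : X) (h_idem : ip e e * ip e e = ip e e)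
    (f g : A → X) (f' g' : A →L[ℝ] X) (kfg' kff' : A →L[ℝ] A) (p a : A)
    (hf : HasFDerivAt f f' p) (hg : HasFDerivAt g g' p)
    (hkfg : HasFDerivAt (fun t => ip (f t) (g t) - ip (f t) e * ip e (g t)) kfg' p)
    (hkff : HasFDerivAt (fun t => ip (f t) (f t) - ip (f t) e * ip e (f t)) kff' p) :
    ((ip (f' a) (g' a) - ip (f' a) e * ip e (g' a))
      + (ip (f p) (g p) - ip (f p) e * ip e (g p)) - kfg' a)
      = ip ((f' a - f p) - smul e (ip e (f' a - f p)))
           ((g' a - g p) - smul e (ip e (g' a - g p)))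
    ∧ 0 ≤ ((ip (f' a) (f' a) - ip (f' a) e * ip e (f' a))
      + (ip (f p) (f p) - ip (f p) e * ip e (f p)) - kff' a) := by
  have h_add₁ (x y z : X) : ip x (y + z) - ip x e * ip e (y + z)
      = (ip x y - ip x e * ip e y) + (ip x z - ip x e * ip e z) := by
    rw [h_add, h_add, mul_add]; abel
  have h_add₁' (x y z : X) : ip (x + y) z - ip (x + y) e * ip e z
      = (ip x z - ip x e * ip e z) + (ip y z - ip y e * ip e z) := by
    rw [h_add', h_add', add_mul]; abel
  have h_bound₁ (x y : X) : ‖ip x y - ip x e * ip e y‖ ≤ (1 + ‖e‖ * ‖e‖) * ‖x‖ * ‖y‖ :=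
    calc ‖ip x y - ip x e * ip e y‖ ≤ ‖ip x y‖ + ‖ip x e‖ * ‖ip e y‖ :=
          (norm_sub_le _ _).trans (by gcongr; exact norm_mul_le _ _)
      _ ≤ ‖x‖ * ‖y‖ + (‖x‖ * ‖e‖) * (‖e‖ * ‖y‖) := by
          gcongr <;> apply h_bound
      _ = _ := by ring
  have h_sub (x y z : X) : ip x (y - z) = ip x y - ip x z :=
    map_sub (AddMonoidHom.mk' (ip x) (h_add x)) y z
  have h_sub' (x y z : X) : ip (x - y) z = ip x z - ip y z :=
    map_sub (AddMonoidHom.mk' (ip · z) (h_add' · · z)) x y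
  have key {g : A → X} {g' : A →L[ℝ] X} {k : A →L[ℝ] A} (hg : HasFDerivAt g g' p)
      (hk : HasFDerivAt (fun t => ip (f t) (g t) - ip (f t) e * ip e (g t)) k p) :
      ((ip (f' a) (g' a) - ip (f' a) e * ip e (g' a))
        + (ip (f p) (g p) - ip (f p) e * ip e (g p)) - k a)
        = ip ((f' a - f p) - smul e (ip e (f' a - f p)))
             ((g' a - g p) - smul e (ip e (g' a - g p))) := by
    rw [ip_sub_smul_sub_smul smul ip h_add h_add' h_smul h_star h_pos h_idem,
      fderiv_apply_of_biadditive_of_bound (fun x y ↦ ip x y - ip x e * ip e y)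
        h_add₁ h_add₁' h_bound₁ hf hg hk]
    simp only [h_sub, h_sub', mul_sub, sub_mul]
    abel
  exact ⟨key hg hkfg, (key hf hkff).symm ▸ h_pos _⟩
end

section
/- Let X be a semi-inner product C*-module over a C*-algebra A, x₀, y₀ ∈ X, p ∈ A, and f = (f₁,…,fₙ) : A → Xⁿ Fréchet differentiable at p with ‖Df(p) − \widehat{(x₀+y₀)/2}‖ ≤ ‖(x₀−y₀)/2‖. Then for all a ∈ A: ‖Σ_{k=1}^{n} k·Df_k(p)(a) − ((n+1)/2)·Σ_{k=1}^{n} Df_k(p)(a)‖ ≤ (‖a‖‖x₀−y₀‖n/4)·((n−1)(n+1)/3)^{1/2}. -/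
/-- In a star-ordered C⋆-ring the imaginary unit is skew-adjoint: antisymmetry of the order rules
out central summands on which the involution is complex linear. -/
theorem star_I_smul_one {A : Type*} [NormedRing A] [StarRing A] [PartialOrder A]
    [StarOrderedRing A] [NormedAlgebra ℂ A] : star (Complex.I • (1 : A)) = -(Complex.I • (1 : A)) := by
  set e : A := Complex.I • (1 : A) with he
  have hee : e * e = -1 := by
    rw [he, smul_mul_smul_comm, Complex.I_mul_I, one_mul, neg_one_smul]
  have hcomm : ∀ a : A, e * a = a * e := fun a => by simp [he]
  have hss : star e * star e = -1 := by
    rw [← star_mul, hee, star_neg, star_one]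
  set s := star e with hs
  have hse : s * e * (s * e) = 1 := by
    calc s * e * (s * e) = s * (e * s) * e := by noncomm_ring
      _ = s * s * (e * e) := by rw [hcomm s]; noncomm_ring
      _ = 1 := by rw [hee, hss]; simp
  set q := 1 - s * e with hq
  have hstarq : star q = q := by simp [hq, hs]
  have hqq : q * q = q + q := by
    calc q * q = 1 - s * e - s * e + s * e * (s * e) := by rw [hq]; noncomm_ring
      _ = q + q := by rw [hse, hq]; abel
  have hseq : s * e * q = -q := by
    rw [hq, mul_sub, hse, mul_one, neg_sub]
  have h₁ : 0 ≤ q + q := by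
    rw [← hqq]
    nth_rw 1 [← hstarq]
    exact star_mul_self_nonneg q
  have h₂ : 0 ≤ -(q + q) := by
    have h := star_mul_self_nonneg (q * e)
    rwa [show star (q * e) * (q * e) = -(q + q) by
      calc star (q * e) * (q * e) = s * (q * q) * e := by
            rw [star_mul, hstarq]; noncomm_ring
        _ = s * e * q + s * e * q := by
            rw [hqq, mul_assoc, ← hcomm (q + q)]; noncomm_ring
        _ = -(q + q) := by rw [hseq]; abel] at h
  have h0 : q + q = 0 := le_antisymm (neg_nonneg.mp h₂) h₁
  have hq0 : q = 0 := by
    rw [← two_smul ℂ q] at h0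
    exact (smul_eq_zero.mp h0).resolve_left two_ne_zero
  have h1 : s * e = 1 := (sub_eq_zero.mp hq0).symm
  calc s = -(s * (e * e)) := by rw [hee]; simp
    _ = -e := by rw [← mul_assoc, h1, one_mul]

theorem norm_le_norm_of_nonneg_of_le_of_starOrderedRing {A : Type*} [NormedRing A] [StarRing A] [CStarRing A]
    [PartialOrder A] [StarOrderedRing A] [NormedAlgebra ℂ A] [CompleteSpace A] {a b : A}
    (ha : 0 ≤ a) (hab : a ≤ b) : ‖a‖ ≤ ‖b‖ := by
  have := starModule_complex_of_starOrderedRing (A := A)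
  let _ : CStarAlgebra A := {}
  exact CStarAlgebra.norm_le_norm_of_nonneg_of_le ha hab

/-- Cauchy–Schwarz inequality for real combinations of vectors in a semi-inner product module. -/
theorem semiInner_sum_smul_le {A X ι : Type*} [Fintype ι] [AddCommGroup A] [PartialOrder A]
    [IsOrderedAddMonoid A] [Module ℝ A] [AddCommGroup X] [Module ℝ X]
    (B : X →ₗ[ℝ] X →ₗ[ℝ] A) (h_pos : ∀ x, 0 ≤ B x x) (c : ι → ℝ) (z : ι → X) :
    2 • B (∑ i, c i • z i) (∑ i, c i • z i) ≤ 2 • (∑ i, c i ^ 2) • ∑ i, B (z i) (z i) := by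
  have key : ∑ i, ∑ j, B (c i • z j - c j • z i) (c i • z j - c j • z i)
      = 2 • (∑ i, c i ^ 2) • ∑ i, B (z i) (z i)
        - 2 • B (∑ i, c i • z i) (∑ i, c i • z i) := by
    have hdiag : (∑ i, c i ^ 2) • ∑ i, B (z i) (z i)
        = ∑ i, ∑ j, c i ^ 2 • B (z j) (z j) := by
      simp only [Finset.sum_smul, Finset.smul_sum]
      exact Finset.sum_comm
    have hdiag' : (∑ i, c i ^ 2) • ∑ i, B (z i) (z i)
        = ∑ i, ∑ j, c j ^ 2 • B (z i) (z i) := by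
      rw [hdiag, Finset.sum_comm]
    have hcross : B (∑ i, c i • z i) (∑ i, c i • z i)
        = ∑ i, ∑ j, (c i * c j) • B (z i) (z j) := by
      simp only [map_sum, map_smul, LinearMap.sum_apply, LinearMap.smul_apply, Finset.smul_sum,
        smul_smul]
      rw [Finset.sum_comm]
      simp only [mul_comm]
    have hcross' : B (∑ i, c i • z i) (∑ i, c i • z i)
        = ∑ i, ∑ j, (c i * c j) • B (z j) (z i) := by
      rw [hcross, Finset.sum_comm]
      simp only [mul_comm]
    rw [two_nsmul, two_nsmul]
    nth_rw 1 [hdiag]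
    nth_rw 1 [hdiag', hcross]
    rw [hcross']
    simp only [← Finset.sum_add_distrib, ← Finset.sum_sub_distrib]
    refine Finset.sum_congr rfl fun i _ => Finset.sum_congr rfl fun j _ => ?_
    simp only [map_sub, map_smul, LinearMap.sub_apply, LinearMap.smul_apply]
    module
  rw [← sub_nonneg, ← key]
  exact Finset.sum_nonneg fun i _ => Finset.sum_nonneg fun j _ => h_pos _

theorem Fin.sum_sub_center (n : ℕ) : ∑ k : Fin n, ((k : ℝ) + 1 - ((n : ℝ) + 1) / 2) = 0 := by
  rw [Fin.sum_univ_eq_sum_range (fun k : ℕ => (k : ℝ) + 1 - ((n : ℝ) + 1) / 2),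
    Finset.sum_sub_distrib]
  have h : ∑ k ∈ Finset.range n, ((k : ℝ) + 1) = n * (n + 1) / 2 := by
    induction n with
    | zero => simp
    | succ n ih => rw [Finset.sum_range_succ, ih]; push_cast; ring
  rw [h]
  simp
  ring

theorem Fin.sum_sub_center_sq (n : ℕ) :
    ∑ k : Fin n, ((k : ℝ) + 1 - ((n : ℝ) + 1) / 2) ^ 2
      = n * (((n : ℝ) - 1) * (n + 1)) / 12 := by
  rw [Fin.sum_univ_eq_sum_range (fun k : ℕ => ((k : ℝ) + 1 - ((n : ℝ) + 1) / 2) ^ 2)]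
  have h (m : ℕ) (t : ℝ) : ∑ k ∈ Finset.range m, ((k : ℝ) + 1 - t) ^ 2
      = m * (m + 1) * (2 * m + 1) / 6 - t * m * (m + 1) + m * t ^ 2 := by
    induction m with
    | zero => simp
    | succ m ih => rw [Finset.sum_range_succ, ih]; push_cast; ring
  rw [h]
  ring


/-- Special case rᵢ = 1/n, αₖ = k of the weighted Grüss inequality:
‖Σₖ k·Df_k(p)(a) − ((n+1)/2)·Σₖ Df_k(p)(a)‖
  ≤ (‖a‖‖x₀−y₀‖n/4)·((n−1)(n+1)/3)^{1/2}. -/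
theorem stmt_10 {A : Type*} [NormedRing A] [StarRing A] [CStarRing A] [PartialOrder A]
    [StarOrderedRing A] [NormedAlgebra ℂ A] [CompleteSpace A]
    {X : Type*} [NormedAddCommGroup X] [NormedSpace ℝ X]
    (smul : X → A → X)
    (ip : X → X → A)
    (h_add : ∀ x y z : X, ip x (y + z) = ip x y + ip x z)
    (h_add' : ∀ x y z : X, ip (x + y) z = ip x z + ip y z)
    (h_smul : ∀ (x y : X) (a : A), ip x (smul y a) = ip x y * a)
    (h_rsmul : ∀ (c : ℝ) (x y : X), ip x (c • y) = c • ip x y)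
    (h_rsmul' : ∀ (c : ℝ) (x y : X), ip (c • x) y = c • ip x y)
    (h_star : ∀ x y : X, star (ip x y) = ip y x)
    (h_pos : ∀ x : X, 0 ≤ ip x x)
    (h_norm : ∀ x : X, ‖x‖ = Real.sqrt ‖ip x x‖)
    (x₀ y₀ : X) (n : ℕ)
    (f : Fin n → A → X) (f' : Fin n → A →L[ℝ] X) (p : A)
    (hf : ∀ i, HasFDerivAt (f i) (f' i) p)
    (hfop : ∀ b : A,
      Real.sqrt ‖∑ i, ip (f' i b - smul ((2⁻¹ : ℝ) • (x₀ + y₀)) b)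
                       (f' i b - smul ((2⁻¹ : ℝ) • (x₀ + y₀)) b)‖
        ≤ ‖(2⁻¹ : ℝ) • (x₀ - y₀)‖ * ‖b‖) :
    ∀ a : A,
      ‖(∑ k : Fin n, ((k : ℝ) + 1) • (f' k a))
          - (((n : ℝ) + 1) / 2) • ∑ k : Fin n, (f' k a)‖
        ≤ ‖a‖ * ‖x₀ - y₀‖ * (n : ℝ) / 4 *
            Real.sqrt (((n : ℝ) - 1) * ((n : ℝ) + 1) / 3) := by
  intro a
  let B : X →ₗ[ℝ] X →ₗ[ℝ] A := LinearMap.mk₂ ℝ ip h_add' h_rsmul' h_add h_rsmul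
  set w : X := smul ((2⁻¹ : ℝ) • (x₀ + y₀)) a
  set c : Fin n → ℝ := fun k => (k : ℝ) + 1 - ((n : ℝ) + 1) / 2 with hc
  set z : Fin n → X := fun k => f' k a - w with hz
  have hS : 0 ≤ ∑ k, c k ^ 2 := Finset.sum_nonneg fun _ _ => sq_nonneg _
  have hsum : (∑ k : Fin n, ((k : ℝ) + 1) • (f' k a))
      - (((n : ℝ) + 1) / 2) • ∑ k : Fin n, (f' k a) = ∑ k, c k • z k := by
    have hw : ∑ k, c k • w = 0 := by
      rw [← Finset.sum_smul, Fin.sum_sub_center, zero_smul]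
    simp only [hz, smul_sub, Finset.sum_sub_distrib, hw, sub_zero]
    simp only [hc, sub_smul, Finset.sum_sub_distrib, Finset.smul_sum]
  have hCS : ‖∑ k, c k • z k‖ ≤ √(∑ k, c k ^ 2) * √‖∑ k, ip (z k) (z k)‖ := by
    have hle := semiInner_sum_smul_le B h_pos c z
    have hnorm := norm_le_norm_of_nonneg_of_le_of_starOrderedRing
      (nsmul_nonneg (h_pos (∑ k, c k • z k)) 2) hle
    rw [h_norm, ← Real.sqrt_mul hS]
    apply Real.sqrt_le_sqrt
    rw [← Nat.cast_smul_eq_nsmul ℝ, ← Nat.cast_smul_eq_nsmul ℝ, norm_smul, norm_smul, norm_smul,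
      Real.norm_of_nonneg hS] at hnorm
    exact le_of_mul_le_mul_left hnorm (by norm_num)
  have hconst : √(∑ k, c k ^ 2) ≤ n / 2 * √(((n : ℝ) - 1) * ((n : ℝ) + 1) / 3) := by
    rw [Fin.sum_sub_center_sq]
    rcases Nat.eq_zero_or_pos n with rfl | hn
    · simp
    have hn : (1 : ℝ) ≤ n := by exact_mod_cast hn
    have h : 0 ≤ ((n : ℝ) - 1) * (n + 1) := mul_nonneg (by linarith) (by linarith)
    apply Real.sqrt_le_iff.mpr ⟨by positivity, ?_⟩
    rw [mul_pow, Real.sq_sqrt (by positivity)]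
    nlinarith [mul_nonneg (mul_nonneg h (sub_nonneg.mpr hn)) (zero_le_one.trans hn)]
  calc _ = ‖∑ k, c k • z k‖ := by rw [hsum]
    _ ≤ √(∑ k, c k ^ 2) * √‖∑ k, ip (z k) (z k)‖ := hCS
    _ ≤ (n / 2 * √(((n : ℝ) - 1) * ((n : ℝ) + 1) / 3))
          * (‖(2⁻¹ : ℝ) • (x₀ - y₀)‖ * ‖a‖) := by
        gcongr
        exact hfop a
    _ = _ := by
        rw [norm_smul, Real.norm_of_nonneg (by norm_num)]
        ring
end
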